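/- arXiv:1212.2243 — 3 statements merged into one kernel-verified Lean document; each statement's English description precedes it below -/
import Mathlib

section
/- Let 𝔽 be a field, let G(z) = G₀ + G₁z + ⋯ + G_δ z^δ be a k×n matrix over 𝔽[z] such that the stacked ((δ+1)k)×n matrix (G_δ; …; G₀) has rank k(δ+1), and let μ be the minimum Hamming distance of the linear block code spanned over 𝔽 by the rows of this stacked matrix. Let α(z) = α₀ + α₁z + ⋯ + α_l z^l with α_i ∈ 𝔽^k, α₀ ≠ 0 and α_l ≠ 0, and suppose that there is no index j with δ ≤ j ≤ l such that α_{j−δ} = α_{j−δ+1} = ⋯ = α_j = 0 (this condition is vacuous when l < δ). Then w(α(z)·G(z)) ≥ (l+δ+1)·μ. -/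
open Polynomial

/-- The weight of a vector of polynomials: the total number of nonzero coefficients. -/
noncomputable def polyWeight {F : Type*} [Field F] {n : ℕ} (c : Fin n → Polynomial F) : ℕ :=
  ∑ j, (c j).support.card

/-- The free distance of a submodule of `𝔽[z]ⁿ`: the minimal weight of a nonzero element. -/
noncomputable def freeDist {F : Type*} [Field F] {n : ℕ}
    (C : Submodule (Polynomial F) (Fin n → Polynomial F)) : ℕ :=
  sInf {d | ∃ c ∈ C, c ≠ 0 ∧ polyWeight c = d}

/-- The Hamming weight of a vector. -/
noncomputable def hammingWt {F : Type*} [Field F] {n : ℕ} (v : Fin n → F) : ℕ :=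
  Set.ncard {j | v j ≠ 0}

/-- The minimum distance of a linear block code. -/
noncomputable def minDist {F : Type*} [Field F] {n : ℕ} (C : Submodule F (Fin n → F)) : ℕ :=
  sInf {d | ∃ v ∈ C, v ≠ 0 ∧ hammingWt v = d}

/-- The `l`-th row distance of the convolutional code with generator matrix `G`. -/
noncomputable def rowDist {F : Type*} [Field F] {k n : ℕ}
    (G : Fin k → Fin n → Polynomial F) (l : ℕ) : ℕ :=
  sInf {d | ∃ α : Fin k → Polynomial F, α ≠ 0 ∧ (∀ i, (α i).natDegree ≤ l) ∧
    polyWeight (fun j => ∑ i, α i * G i j) = d}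

/-- The set of maximal (`k × k`) minors of a `k × n` polynomial matrix. -/
def maximalMinors {F : Type*} [Field F] {k n : ℕ} (G : Fin k → Fin n → Polynomial F) :
    Set (Polynomial F) :=
  {p | ∃ φ : Fin k ↪ Fin n, p = Matrix.det (Matrix.of fun i j => G i (φ j))}

/-- A generator matrix is basic when its maximal minors are coprime, i.e. generate the
unit ideal of `𝔽[z]`. -/
def IsBasic {F : Type*} [Field F] {k n : ℕ} (G : Fin k → Fin n → Polynomial F) : Prop :=
  Ideal.span (maximalMinors G) = ⊤

/-- The degree of the code: the highest degree of the maximal minors of a generator matrix. -/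
noncomputable def degCode {F : Type*} [Field F] {k n : ℕ}
    (G : Fin k → Fin n → Polynomial F) : ℕ :=
  sSup (Polynomial.natDegree '' maximalMinors G)

/-- The degree of the `i`-th row of a polynomial matrix. -/
noncomputable def rowDeg {F : Type*} [Field F] {k n : ℕ}
    (G : Fin k → Fin n → Polynomial F) (i : Fin k) : ℕ :=
  Finset.univ.sup fun j => (G i j).natDegree

/-- A generator matrix is reduced when the sum of its row degrees equals the maximal degree
of its maximal minors. -/
def IsReducedMatrix {F : Type*} [Field F] {k n : ℕ} (G : Fin k → Fin n → Polynomial F) : Prop :=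
  (∑ i, rowDeg G i) = degCode G

/-- A generator matrix is canonical when it is basic and reduced. -/
def IsCanonical {F : Type*} [Field F] {k n : ℕ} (G : Fin k → Fin n → Polynomial F) : Prop :=
  IsBasic G ∧ IsReducedMatrix G

/-!
The coefficient of `z^t` in `α(z) G(z)` is `(α_t, …, α_{t-δ})`, padded with zeros, times the
stacked matrix, so it is a word of the block code; since the rows are independent, this word is
nonzero as soon as the window `(α_t, …, α_{t-δ})` is. For each `t ≤ l + δ` the window is nonzero: it
contains `α_0`, or `α_l`, or lies in `[0, l]`, where there is no gap. So each of these `l + δ + 1`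
coefficients contributes at least `μ` to the weight.
-/

section Coefficients

open scoped Matrix

variable {R ι κ : Type*} [Semiring R]

/-- The coefficient vector `c_t` of a vector of polynomials `c(z) = ∑ c_t z^t`. -/
def coeffVec (c : ι → R[X]) (t : ℕ) : ι → R := fun i => (c i).coeff t

/-- The window `(a_t, a_{t-1}, …, a_{t-δ})` of coefficient vectors of `a(z)`, where `a_m = 0` for
`m < 0`; the block at position `d` is `a_{t-d}`. -/
def coeffWindow (δ : ℕ) (a : ι → R[X]) (t : ℕ) : Fin (δ + 1) × ι → R :=
  fun p => if (p.1 : ℕ) ≤ t then coeffVec a (t - p.1) p.2 else 0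

/-- The matrix obtained by stacking the coefficient matrices `G_0, …, G_δ` of `G(z)`, with rows
indexed by the pair of an exponent and a row of `G(z)`. -/
def stackedCoeffMatrix (δ : ℕ) (G : Matrix ι κ R[X]) : Matrix (Fin (δ + 1) × ι) κ R :=
  Matrix.of fun p j => (G p.2 j).coeff p.1

theorem coeffWindow_ne_zero {δ t m : ℕ} {a : ι → R[X]} (hmt : m ≤ t) (htm : t ≤ m + δ)
    (hm : coeffVec a m ≠ 0) : coeffWindow δ a t ≠ 0 := by
  obtain ⟨i, hi⟩ := Function.ne_iff.mp hm
  refine Function.ne_iff.mpr ⟨(⟨t - m, by omega⟩, i), ?_⟩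
  simpa [coeffWindow, Nat.sub_sub_self hmt] using hi

theorem coeffWindow_ne_zero_of_no_gap {δ l t : ℕ} {a : ι → R[X]} (h0 : coeffVec a 0 ≠ 0)
    (hl : coeffVec a l ≠ 0)
    (hgap : ∀ j, δ ≤ j → j ≤ l → ∃ m, j - δ ≤ m ∧ m ≤ j ∧ coeffVec a m ≠ 0)
    (ht : t ≤ l + δ) : coeffWindow δ a t ≠ 0 := by
  rcases le_total t δ with htδ | hδt
  · exact coeffWindow_ne_zero t.zero_le (by omega) h0
  rcases le_total l t with hlt | htl
  · exact coeffWindow_ne_zero hlt ht hl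
  · obtain ⟨m, htm, hmt, hm⟩ := hgap t hδt htl
    exact coeffWindow_ne_zero hmt (by omega) hm

theorem coeff_sum_range_C_mul_X_pow {N : ℕ} {a : ℕ → R} (ha : ∀ d, N < d → a d = 0) (t : ℕ) :
    (∑ d ∈ Finset.range (N + 1), C (a d) * X ^ d).coeff t = a t := by
  simp only [finsetSum_coeff, coeff_C_mul_X_pow, Finset.sum_ite_eq, Finset.mem_range,
    Order.lt_add_one_iff, ite_eq_left_iff, not_le]
  exact fun ht => (ha t ht).symm

theorem coeff_mul_eq_sum_of_natDegree_le {p q : R[X]} {N : ℕ} (hq : q.natDegree ≤ N) (t : ℕ) :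
    (p * q).coeff t =
      ∑ d : Fin (N + 1), if (d : ℕ) ≤ t then p.coeff (t - d) * q.coeff d else 0 := by
  conv_lhs => rw [q.as_sum_range_C_mul_X_pow' (Nat.lt_succ_of_le hq)]
  simp only [Finset.mul_sum, finsetSum_coeff, ← mul_assoc, coeff_mul_X_pow', coeff_mul_C,
    Finset.sum_range]

theorem coeffVec_vecMul [Fintype ι] {δ : ℕ} {G : Matrix ι κ R[X]}
    (hG : ∀ i j, (G i j).natDegree ≤ δ) (a : ι → R[X]) (t : ℕ) :
    coeffVec (a ᵥ* G) t = coeffWindow δ a t ᵥ* stackedCoeffMatrix δ G := by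
  ext j
  simp only [coeffVec, coeffWindow, stackedCoeffMatrix, Matrix.vecMul, dotProduct, Matrix.of_apply,
    finsetSum_coeff, coeff_mul_eq_sum_of_natDegree_le (hG _ j), ite_mul, zero_mul,
    Fintype.sum_prod_type_right]

end Coefficients

theorem linearIndependent_row_of_rank_eq_card {m n F : Type*} [Field F] [Fintype m] [Fintype n]
    {M : Matrix m n F} (hM : M.rank = Fintype.card m) : LinearIndependent F M.row := by
  rw [linearIndependent_iff_card_eq_finrank_span, Set.finrank, ← Matrix.rank_eq_finrank_span_row,
    hM]

section Weight

open scoped Matrix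

variable {F : Type*} [Field F] {n : ℕ}

theorem hammingWt_eq_card [DecidableEq F] (v : Fin n → F) :
    hammingWt v = (Finset.univ.filter fun j => v j ≠ 0).card := by
  rw [hammingWt, ← Set.ncard_coe_finset, Finset.coe_filter_univ]

theorem minDist_le_hammingWt {C : Submodule F (Fin n → F)} {v : Fin n → F} (hv : v ∈ C)
    (hv0 : v ≠ 0) : minDist C ≤ hammingWt v :=
  Nat.sInf_le ⟨v, hv, hv0, rfl⟩

theorem sum_hammingWt_coeffVec_le_polyWeight (c : Fin n → F[X]) (s : Finset ℕ) :
    ∑ t ∈ s, hammingWt (coeffVec c t) ≤ polyWeight c := by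
  classical
  calc ∑ t ∈ s, hammingWt (coeffVec c t)
      = ∑ j, (s.filter fun t => (c j).coeff t ≠ 0).card := by
        simp only [hammingWt_eq_card, coeffVec]
        exact Finset.sum_card_bipartiteAbove_eq_sum_card_bipartiteBelow _
    _ ≤ ∑ j, (c j).support.card := by
        refine Finset.sum_le_sum fun j _ => Finset.card_le_card fun t ht => ?_
        exact mem_support_iff.mpr (Finset.mem_filter.mp ht).2

theorem card_mul_minDist_le_polyWeight {C : Submodule F (Fin n → F)} {c : Fin n → F[X]}
    {s : Finset ℕ} (hC : ∀ t ∈ s, coeffVec c t ∈ C) (h0 : ∀ t ∈ s, coeffVec c t ≠ 0) :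
    s.card * minDist C ≤ polyWeight c :=
  calc s.card * minDist C
      ≤ ∑ t ∈ s, hammingWt (coeffVec c t) :=
        Finset.card_nsmul_le_sum _ _ _ fun t ht => minDist_le_hammingWt (hC t ht) (h0 t ht)
    _ ≤ polyWeight c := sum_hammingWt_coeffVec_le_polyWeight c s

theorem card_mul_minDist_le_polyWeight_vecMul {ι : Type*} [Fintype ι] {δ : ℕ}
    {G : Matrix ι (Fin n) F[X]} (hdeg : ∀ i j, (G i j).natDegree ≤ δ)
    (hrow : LinearIndependent F (stackedCoeffMatrix δ G).row) {a : ι → F[X]} {s : Finset ℕ}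
    (hs : ∀ t ∈ s, coeffWindow δ a t ≠ 0) :
    s.card * minDist (Submodule.span F (Set.range (stackedCoeffMatrix δ G).row)) ≤
      polyWeight (a ᵥ* G) := by
  refine card_mul_minDist_le_polyWeight (fun t _ => ?_) fun t ht => ?_
  · rw [coeffVec_vecMul hdeg, ← range_vecMulLinear]
    exact LinearMap.mem_range_self _ (coeffWindow δ a t)
  · rw [coeffVec_vecMul hdeg, ← Matrix.zero_vecMul (stackedCoeffMatrix δ G)]
    exact (Matrix.vecMul_injective_iff.mpr hrow).ne (hs t ht)

end Weight

/-- If the stacked matrix `(G_δ; …; G₀)` has rank `k(δ+1)`, `μ` is the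
minimum distance of the block code spanned by its rows, and `α(z) = α₀ + ⋯ + α_l z^l` has
`α₀ ≠ 0`, `α_l ≠ 0` and no gap of `δ+1` consecutive vanishing coefficients `α_{j-δ},…,α_j`
with `δ ≤ j ≤ l`, then `w(α(z)·G(z)) ≥ (l+δ+1)·μ`. -/
theorem weight_lower_bound {F : Type*} [Field F] {k n δ l : ℕ}
    (Gc : ℕ → Fin k → Fin n → F) (hGc : ∀ d, δ < d → Gc d = 0)
    (hrank : Matrix.rank
      (Matrix.of fun (p : Fin (δ + 1) × Fin k) (j : Fin n) => Gc (p.1 : ℕ) p.2 j) = k * (δ + 1))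
    (μ : ℕ)
    (hμ : μ = minDist (Submodule.span F
      (Set.range fun p : Fin (δ + 1) × Fin k => fun j => Gc (p.1 : ℕ) p.2 j)))
    (α : ℕ → Fin k → F) (hα : ∀ d, l < d → α d = 0)
    (h0 : α 0 ≠ 0) (hl : α l ≠ 0)
    (hgap : ¬ ∃ j, δ ≤ j ∧ j ≤ l ∧ ∀ m, j - δ ≤ m → m ≤ j → α m = 0) :
    (l + δ + 1) * μ ≤ polyWeight (fun col : Fin n =>
      ∑ i : Fin k, (∑ d ∈ Finset.range (l + 1), Polynomial.C (α d i) * Polynomial.X ^ d) *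
        (∑ d ∈ Finset.range (δ + 1), Polynomial.C (Gc d i col) * Polynomial.X ^ d)) := by
  let a : Fin k → F[X] := fun i => ∑ d ∈ Finset.range (l + 1), C (α d i) * X ^ d
  let G : Matrix (Fin k) (Fin n) F[X] :=
    Matrix.of fun i j => ∑ d ∈ Finset.range (δ + 1), C (Gc d i j) * X ^ d
  have hcoeff_a : coeffVec a = α := by
    ext t i
    exact coeff_sum_range_C_mul_X_pow (fun d hd => congrFun (hα d hd) i) t
  have hcoeff_G (i : Fin k) (j : Fin n) (t : ℕ) : (G i j).coeff t = Gc t i j :=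
    coeff_sum_range_C_mul_X_pow (fun d hd => congrFun₂ (hGc d hd) i j) t
  have hstack : stackedCoeffMatrix δ G = Matrix.of fun p j => Gc p.1 p.2 j := by
    ext p j
    exact hcoeff_G p.2 j p.1
  have hdeg (i : Fin k) (j : Fin n) : (G i j).natDegree ≤ δ :=
    natDegree_le_iff_coeff_eq_zero.mpr fun d hd => by rw [hcoeff_G, hGc d hd]; rfl
  have hrow : LinearIndependent F (stackedCoeffMatrix δ G).row :=
    linearIndependent_row_of_rank_eq_card (by rw [hstack, hrank]; simp [mul_comm])
  have hwindow (t : ℕ) (ht : t ∈ Finset.range (l + δ + 1)) : coeffWindow δ a t ≠ 0 := by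
    push Not at hgap
    rw [← hcoeff_a] at h0 hl hgap
    exact coeffWindow_ne_zero_of_no_gap h0 hl hgap (Finset.mem_range_succ_iff.mp ht)
  have hbound := card_mul_minDist_le_polyWeight_vecMul hdeg hrow hwindow
  rw [Finset.card_range, hstack] at hbound
  exact hμ ▸ hbound
end

section
/- Let 𝔽 be a finite field, let A be a valuation ring containing 𝔽, with maximal ideal 𝔪, residue field κ = A/𝔪 and fraction field K. Let G(z) be a k×n matrix over A[z] and let Ḡ(z) be its reduction modulo 𝔪, a matrix over κ[z]. Assume the rows of Ḡ(z) are linearly independent over κ(z) (then the rows of G(z) are linearly independent over K(z)). Let C_K ⊆ K[z]ⁿ be the K[z]-submodule spanned by the rows of G(z) and C_κ ⊆ κ[z]ⁿ the κ[z]-submodule spanned by the rows of Ḡ(z). Then d_free(C_K) ≥ d_free(C_κ): the free distance can only decrease under specialization to the residue field. -/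
open Polynomial

/-!
A nonzero codeword over `K[z]` is `α G_K` for some message `α ≠ 0`. Among the finitely many
coefficients of `α` choose one of maximal valuation and divide by it: the message becomes one over
`A[z]` with a coefficient equal to `1`, so it stays nonzero under any specialization of `A`, and by
independence of the specialized rows so does its codeword. The weight is unchanged by the scaling,
and specializing coefficients can only annihilate them.
-/

section ValuationRing

variable (A : Type*) {K : Type*} [CommRing A] [IsDomain A] [ValuationRing A]
  [Field K] [Algebra A K] [IsFractionRing A K]

theorem exists_ne_zero_forall_div_mem_range (S : Finset K) (hS : ∃ x ∈ S, x ≠ 0) :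
    ∃ a ∈ S, a ≠ 0 ∧ ∀ x ∈ S, x / a ∈ (algebraMap A K).range := by
  let v := ValuationRing.valuation A K
  obtain ⟨x₀, hx₀, hx₀_ne⟩ := hS
  obtain ⟨a, ha, hmax⟩ := S.exists_max_image v ⟨x₀, hx₀⟩
  have hva : 0 < v a := (v.pos_iff.mpr hx₀_ne).trans_le (hmax x₀ hx₀)
  refine ⟨a, ha, v.pos_iff.mp hva, fun x hx => ?_⟩
  have hle : v (x / a) ≤ 1 := by
    rw [map_div₀]
    exact div_le_one_of_le₀ (hmax x hx) hva.le
  exact (ValuationRing.mem_integer_iff A K _).mp hle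

theorem exists_smul_eq_map_coeff_eq_one {ι : Type*} [Finite ι] {α : ι → K[X]} (hα : α ≠ 0) :
    ∃ (s : K) (β : ι → A[X]), s ≠ 0 ∧ mapRingHom (algebraMap A K) ∘ β = C s • α ∧
      ∃ i m, (β i).coeff m = 1 := by
  classical
  cases nonempty_fintype ι
  let S : Finset K := Finset.univ.biUnion fun i => (α i).coeffs
  have coeff_mem {i m} (h : (α i).coeff m ≠ 0) : (α i).coeff m ∈ S :=
    Finset.mem_biUnion.mpr ⟨i, Finset.mem_univ i, coeff_mem_coeffs h⟩
  have exists_coeff_ne_zero : ∃ x ∈ S, x ≠ 0 := by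
    obtain ⟨i, hi⟩ := Function.ne_iff.mp hα
    have hlead : (α i).coeff (α i).natDegree ≠ 0 := leadingCoeff_ne_zero.mpr hi
    exact ⟨_, coeff_mem hlead, hlead⟩
  obtain ⟨a, haS, ha, hdiv⟩ := exists_ne_zero_forall_div_mem_range A S exists_coeff_ne_zero
  have scaled_mem_lifts (i : ι) : C a⁻¹ * α i ∈ lifts (algebraMap A K) := by
    refine (lifts_iff_coeff_lifts _).mpr fun m => ?_
    rw [coeff_C_mul, inv_mul_eq_div]
    by_cases hm : (α i).coeff m = 0
    · exact ⟨0, by rw [hm, zero_div, map_zero]⟩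
    · exact hdiv _ (coeff_mem hm)
  choose β hβ using fun i => (mem_lifts _).mp (scaled_mem_lifts i)
  refine ⟨a⁻¹, β, inv_ne_zero ha, funext hβ, ?_⟩
  obtain ⟨i, -, hai⟩ := Finset.mem_biUnion.mp haS
  obtain ⟨m, -, rfl⟩ := mem_coeffs_iff.mp hai
  refine ⟨i, m, IsFractionRing.injective A K ?_⟩
  rw [← coeff_map, hβ, coeff_C_mul, inv_mul_cancel₀ ha, map_one]

end ValuationRing

section Weight

variable {K L : Type*} [Field K] [Field L] {n : ℕ}

theorem polyWeight_C_smul {s : K} (hs : s ≠ 0) (c : Fin n → K[X]) :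
    polyWeight (C s • c) = polyWeight c := by
  refine Finset.sum_congr rfl fun j _ => congrArg Finset.card ?_
  ext m
  simp [hs]

theorem polyWeight_map_le_of_injective {R : Type*} [Semiring R] (φ : R →+* L) {f : R →+* K}
    (hf : Function.Injective f) (c : Fin n → R[X]) :
    polyWeight (mapRingHom φ ∘ c) ≤ polyWeight (mapRingHom f ∘ c) := by
  refine Finset.sum_le_sum fun j _ => Finset.card_le_card ?_
  calc ((c j).map φ).support ⊆ (c j).support := support_map_subset φ (c j)
    _ = ((c j).map f).support := (support_map_of_injective (c j) hf).symm

theorem freeDist_le_polyWeight {C : Submodule K[X] (Fin n → K[X])} {c : Fin n → K[X]}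
    (hc : c ∈ C) (hc0 : c ≠ 0) : freeDist C ≤ polyWeight c :=
  Nat.sInf_le ⟨c, hc, hc0, rfl⟩

theorem exists_polyWeight_eq_freeDist {C : Submodule K[X] (Fin n → K[X])} (hC : C ≠ ⊥) :
    ∃ c ∈ C, c ≠ 0 ∧ polyWeight c = freeDist C := by
  obtain ⟨c, hc, hc0⟩ := C.ne_bot_iff.mp hC
  have weights_nonempty : {d | ∃ c ∈ C, c ≠ 0 ∧ polyWeight c = d}.Nonempty :=
    ⟨polyWeight c, c, hc, hc0, rfl⟩
  exact Nat.sInf_mem weights_nonempty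

theorem freeDist_bot : freeDist (⊥ : Submodule K[X] (Fin n → K[X])) = 0 := by
  simp [freeDist]

end Weight

section Specialization

open scoped Matrix

/-- The code spanned over `S[z]` by the rows of a generator matrix `G` over `R[z]` whose
coefficients are mapped along `f : R →+* S`: this is `C_K` for the inclusion of `R` in its fraction
field and `C_κ` for the reduction to its residue field. -/
noncomputable def rowCode {R S ι ι' : Type*} [Semiring R] [Semiring S] (f : R →+* S)
    (G : Matrix ι ι' R[X]) : Submodule S[X] (ι' → S[X]) :=
  Submodule.span S[X] (Set.range (G.map (mapRingHom f)).row)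

theorem mem_rowCode_iff_exists_vecMul {R S ι ι' : Type*} [Semiring R] [CommSemiring S] [Fintype ι]
    {f : R →+* S} {G : Matrix ι ι' R[X]} {c : ι' → S[X]} :
    c ∈ rowCode f G ↔ ∃ u : ι → S[X], u ᵥ* G.map (mapRingHom f) = c := by
  rw [rowCode, ← range_vecMulLinear]
  exact Iff.rfl

theorem rowCode_eq_bot_of_injective {R S T ι ι' : Type*} [Semiring R] [Semiring S] [Semiring T]
    {f : R →+* S} (hf : Function.Injective f) (φ : R →+* T) {G : Matrix ι ι' R[X]}
    (h : rowCode f G = ⊥) : rowCode φ G = ⊥ := by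
  rw [rowCode, Submodule.span_eq_bot, Set.forall_mem_range] at h ⊢
  have hG (i : ι) (j : ι') : G i j = 0 := (Polynomial.map_eq_zero_iff hf).mp (congrFun (h i) j)
  intro i
  ext1 j
  simp [hG]

theorem mapRingHom_comp_vecMul {R S ι ι' : Type*} [Semiring R] [Semiring S] [Fintype ι]
    (f : R →+* S) (u : ι → R[X]) (G : Matrix ι ι' R[X]) :
    mapRingHom f ∘ (u ᵥ* G) = (mapRingHom f ∘ u) ᵥ* G.map (mapRingHom f) :=
  funext (RingHom.map_vecMul (mapRingHom f) G u)

variable {A K L ι : Type*} [CommRing A] [IsDomain A] [ValuationRing A]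
  [Field K] [Algebra A K] [IsFractionRing A K] [Field L] {n : ℕ}

theorem exists_mem_rowCode_polyWeight_le (φ : A →+* L) {G : Matrix ι (Fin n) A[X]}
    (hind : LinearIndependent L[X] (G.map (mapRingHom φ)).row) {c : Fin n → K[X]}
    (hc : c ∈ rowCode (algebraMap A K) G) (hc0 : c ≠ 0) :
    ∃ d ∈ rowCode φ G, d ≠ 0 ∧ polyWeight d ≤ polyWeight c := by
  have : Finite ι := hind.finite
  cases nonempty_fintype ι
  obtain ⟨α, rfl⟩ := mem_rowCode_iff_exists_vecMul.mp hc
  have hα : α ≠ 0 := by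
    rintro rfl
    exact hc0 (Matrix.zero_vecMul _)
  obtain ⟨s, β, hs, hβ, i, m, hone⟩ := exists_smul_eq_map_coeff_eq_one A hα
  have hβφ : mapRingHom φ ∘ β ≠ 0 := fun h => by
    have hcoeff : ((β i).map φ).coeff m = 0 := congrArg (coeff · m) (congrFun h i)
    rw [coeff_map, hone, map_one] at hcoeff
    exact one_ne_zero hcoeff
  refine ⟨(mapRingHom φ ∘ β) ᵥ* G.map (mapRingHom φ),
    mem_rowCode_iff_exists_vecMul.mpr ⟨_, rfl⟩, fun h => hβφ ?_, ?_⟩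
  · exact Matrix.vecMul_injective_iff.mpr hind (h.trans (Matrix.zero_vecMul _).symm)
  · calc polyWeight ((mapRingHom φ ∘ β) ᵥ* G.map (mapRingHom φ))
        = polyWeight (mapRingHom φ ∘ (β ᵥ* G)) := by rw [mapRingHom_comp_vecMul]
      _ ≤ polyWeight (mapRingHom (algebraMap A K) ∘ (β ᵥ* G)) :=
          polyWeight_map_le_of_injective φ (IsFractionRing.injective A K) _
      _ = polyWeight (C s • (α ᵥ* G.map (mapRingHom (algebraMap A K)))) := by
          rw [mapRingHom_comp_vecMul, hβ, Matrix.smul_vecMul]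
      _ = polyWeight (α ᵥ* G.map (mapRingHom (algebraMap A K))) := polyWeight_C_smul hs _

theorem freeDist_specialization_general (φ : A →+* L) (G : Matrix ι (Fin n) A[X])
    (hind : LinearIndependent L[X] (G.map (mapRingHom φ)).row) :
    freeDist (rowCode φ G) ≤ freeDist (rowCode (algebraMap A K) G) := by
  -- The zero code has free distance `sInf ∅ = 0`, so it must not specialize to a nonzero code.
  by_cases hK : rowCode (algebraMap A K) G = ⊥
  · rw [rowCode_eq_bot_of_injective (IsFractionRing.injective A K) φ hK, freeDist_bot]
    exact Nat.zero_le _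
  · obtain ⟨c, hc, hc0, hmin⟩ := exists_polyWeight_eq_freeDist hK
    obtain ⟨d, hd, hd0, hle⟩ := exists_mem_rowCode_polyWeight_le φ hind hc hc0
    exact (freeDist_le_polyWeight hd hd0).trans (hle.trans_eq hmin)

end Specialization

/-- Let `A` be a valuation ring containing a finite field `𝔽`, with residue
field `κ` and fraction field `K`, and let `G(z)` be a `k × n` matrix over `A[z]` whose
reduction mod the maximal ideal has rows linearly independent over `κ(z)`. Then the free
distance of the code spanned by the rows of `G(z)` over `K[z]` is at least the free distance
of the code spanned by the rows of the reduced matrix over `κ[z]`: the free distance can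
only decrease under specialization to the residue field. -/
theorem freeDist_specialization {F A : Type*} [Field F] [Fintype F]
    [CommRing A] [IsDomain A] [ValuationRing A] [Algebra F A] {k n : ℕ}
    (G : Fin k → Fin n → Polynomial A)
    (hind : LinearIndependent (Polynomial (IsLocalRing.ResidueField A))
      (fun i => fun j => (G i j).map (IsLocalRing.residue A))) :
    freeDist (Submodule.span (Polynomial (IsLocalRing.ResidueField A))
        (Set.range fun i => fun j => (G i j).map (IsLocalRing.residue A))) ≤
      freeDist (Submodule.span (Polynomial (FractionRing A))
        (Set.range fun i => fun j => (G i j).map (algebraMap A (FractionRing A)))) := by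
  exact freeDist_specialization_general (IsLocalRing.residue A) (Matrix.of G) hind
end

section
/- Let 𝔽 be a finite field with algebraic closure 𝔽̄, let 𝒢(z) be a k×n matrix with entries in 𝔽[λ₀,…,λ_r][z], and for α ∈ 𝔽̄^{r+1} let 𝒢_α(z) be the specialization λ_i ↦ α_i. Let U ⊆ 𝔽̄^{r+1} be a Zariski open subset such that for every α ∈ U the matrix 𝒢_α(z) is a canonical (basic and reduced) generator matrix of degree δ, and let C_α be the convolutional code over 𝔽̄ it generates. Then the set of α ∈ U such that C_α is MDS, i.e. {α ∈ U : d_free(C_α) ≥ (n−k)(⌊δ/k⌋+1)+δ+1}, is Zariski open in U. -/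
open Polynomial

/-!
Over a basic matrix `G`, the row span of `G` is the common kernel of the parity checks
`c ↦ det G_φ • c - (c_φ ᵥ* adj G_φ) ᵥ* G`, one for each choice `φ` of `k` columns: if they all
vanish at `c`, then every maximal minor multiplies `c` into the row span, and the maximal minors
generate the unit ideal. The entries of these parity checks are polynomial in the parameters and
their degrees are bounded by some `m` independent of the parameters.

A nonzero word of weight less than `D` may be shifted so that it starts in degree `0`. Among its
first `D` blocks of `m + 1` coefficients one vanishes, and the part of the word before that gap is
again a word. Hence only words of degree less than `D * (m + 1)` matter. They form a block code
with polynomially varying parity-check matrix, and its minimum distance is at least `D` iff any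
fewer than `D` columns are linearly independent, which says that finitely many families of minors
do not vanish identically.
-/

open Matrix

section ZariskiOpen

variable {R K : Type*} [CommRing R] [Field K]

/-- Zariski openness for a set of `K`-points `f : R →+* K` of the affine scheme `Spec R`: it is the
locus where at least one of finitely many elements of `R` does not vanish. For `R` a polynomial
ring over `F` the `F`-linear points are those of affine space. -/
def IsZariskiOpen (V : Set (R →+* K)) : Prop :=
  ∃ s : Finset R, ∀ f, f ∈ V ↔ ∃ p ∈ s, f p ≠ 0

theorem IsZariskiOpen.iInter {κ : Type*} [Finite κ] {V : κ → Set (R →+* K)}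
    (hV : ∀ x, IsZariskiOpen (V x)) : IsZariskiOpen (⋂ x, V x) := by
  classical
  have := Fintype.ofFinite κ
  choose s hs using hV
  refine ⟨(Fintype.piFinset s).image fun g => ∏ x, g x, fun f => ?_⟩
  simp only [Set.mem_iInter, hs, Finset.exists_mem_image, map_prod, Finset.prod_ne_zero_iff,
    Finset.mem_univ, forall_true_left, Fintype.mem_piFinset, Classical.skolem, forall_and]

theorem linearIndependent_col_iff_exists_det_ne_zero {ρ σ : Type*} [Finite ρ] [Fintype σ]
    [DecidableEq σ] (M : Matrix ρ σ K) :
    LinearIndependent K M.col ↔ ∃ g : σ → ρ, (M.submatrix g id).det ≠ 0 := by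
  constructor
  · intro hM
    have hrank : Module.finrank K (Submodule.span K (Set.range M.row)) = Fintype.card σ := by
      have := Fintype.ofFinite ρ
      rw [← rank_eq_finrank_span_row, ← rank_transpose, LinearIndependent.rank_matrix hM]
    obtain ⟨w, hw, -, hli⟩ := Submodule.exists_fun_fin_finrank_span_eq K (Set.range M.row)
    choose g hg using hw
    let e := Fintype.equivFinOfCardEq hrank.symm
    have hrow : (M.submatrix (g ∘ e) id).row = w ∘ e := funext fun i => hg (e i)
    refine ⟨g ∘ e, ?_⟩
    rw [← isUnit_iff_ne_zero, ← isUnit_iff_isUnit_det, ← linearIndependent_rows_iff_isUnit, hrow]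
    exact hli.comp _ e.injective
  · rintro ⟨g, hg⟩
    exact (linearIndependent_cols_of_det_ne_zero hg).of_comp (LinearMap.funLeft K K g)

theorem isZariskiOpen_linearIndependent_col {ρ σ : Type*} [Finite ρ] [Finite σ]
    (M : Matrix ρ σ R) :
    IsZariskiOpen {f : R →+* K | LinearIndependent K (M.map f).col} := by
  classical
  have := Fintype.ofFinite ρ
  have := Fintype.ofFinite σ
  refine ⟨Finset.univ.image fun g : σ → ρ => (M.submatrix g id).det, fun f => ?_⟩
  simp only [Set.mem_ofPred_eq, linearIndependent_col_iff_exists_det_ne_zero,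
    Finset.exists_mem_image, Finset.mem_univ, true_and, RingHom.map_det, RingHom.mapMatrix_apply,
    submatrix_map]

variable [DecidableEq K]

theorem forall_le_hammingNorm_iff_linearIndepOn_col {ρ σ : Type*} [Fintype σ]
    (M : Matrix ρ σ K) (D : ℕ) :
    (∀ v, v ≠ 0 → M *ᵥ v = 0 → D ≤ hammingNorm v) ↔
      ∀ S : {S : Finset σ // S.card < D}, LinearIndepOn K M.col (S : Set σ) := by
  classical
  have hsum : ∀ v, M *ᵥ v = ∑ i, v i • M.col i := fun v => by
    simp only [mulVec_eq_sum, op_smul_eq_smul]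
    rfl
  simp only [linearIndepOn_finset_iff, hsum]
  constructor
  · rintro h ⟨S, hS⟩ a ha i hi
    let v : σ → K := fun j => if j ∈ S then a j else 0
    have hv : ∑ i, v i • M.col i = 0 := by
      simpa [v, ite_smul] using ha
    have hweight : hammingNorm v < D := by
      refine (Finset.card_le_card fun j hj => ?_).trans_lt hS
      simp_all [v]
    have hv0 : v = 0 := by
      by_contra hne
      exact (h v hne hv).not_gt hweight
    simpa [v, hi] using congrFun hv0 i
  · intro h v hv0 hv
    by_contra! hweight
    refine hv0 (funext fun i => by_contra fun hi => hi ?_)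
    refine h ⟨Finset.univ.filter (v · ≠ 0), hweight⟩ v ?_ i (by simpa using hi)
    rw [← hv]
    exact Finset.sum_filter_of_ne fun j _ => left_ne_zero_of_smul

theorem isZariskiOpen_forall_le_hammingNorm {ρ σ : Type*} [Finite ρ] [Fintype σ]
    (M : Matrix ρ σ R) (D : ℕ) :
    IsZariskiOpen {f : R →+* K | ∀ v, v ≠ 0 → M.map f *ᵥ v = 0 → D ≤ hammingNorm v} := by
  simp only [forall_le_hammingNorm_iff_linearIndepOn_col, Set.ofPred_forall]
  exact .iInter fun S =>
    isZariskiOpen_linearIndependent_col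
      (M.submatrix id (Subtype.val : ((S : Finset σ) : Set σ) → σ))

end ZariskiOpen

section Truncation

variable {K : Type*} [Field K] {n : ℕ} {ι : Type*}

theorem exists_eq_X_pow_smul_coeff_zero_ne_zero {c : Fin n → K[X]} (hc : c ≠ 0) :
    ∃ (e : ℕ) (c' : Fin n → K[X]), c = (X ^ e : K[X]) • c' ∧ ∃ j, (c' j).coeff 0 ≠ 0 := by
  classical
  have hex : ∃ e j, (c j).coeff e ≠ 0 := by
    by_contra! h
    exact hc (funext fun j => Polynomial.ext fun e => h e j)
  have hdvd : ∀ j, X ^ Nat.find hex ∣ c j := fun j =>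
    X_pow_dvd_iff.2 fun d hd => by_contra fun h => Nat.find_min hex hd ⟨j, h⟩
  choose c' hc' using hdvd
  obtain ⟨j, hj⟩ := Nat.find_spec hex
  refine ⟨Nat.find hex, c', funext hc', j, ?_⟩
  rwa [hc' j, coeff_X_pow_mul', if_pos le_rfl, Nat.sub_self] at hj

theorem polyWeight_X_pow_smul (e : ℕ) (c : Fin n → K[X]) :
    polyWeight ((X ^ e : K[X]) • c) = polyWeight c := by
  refine Finset.sum_congr rfl fun j _ => ?_
  have hsupp : ((X ^ e : K[X]) * c j).support = (c j).support.map (addRightEmbedding e) := by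
    ext l
    simp only [mem_support_iff, coeff_X_pow_mul', Finset.mem_map, addRightEmbedding_apply]
    constructor
    · intro h
      obtain ⟨hel, hl⟩ := ite_ne_right_iff.1 h
      exact ⟨l - e, hl, Nat.sub_add_cancel hel⟩
    · rintro ⟨l, hl, rfl⟩
      simpa using hl
  rw [Pi.smul_apply, smul_eq_mul, hsupp, Finset.card_map]

theorem degree_modByMonic_X_pow_lt (p : K[X]) (N : ℕ) : (p %ₘ X ^ N).degree < N := by
  simpa only [degree_X_pow] using degree_modByMonic_lt p (monic_X_pow N)

theorem coeff_modByMonic_X_pow_of_lt (p : K[X]) {N l : ℕ} (hl : l < N) :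
    (p %ₘ X ^ N).coeff l = p.coeff l := by
  conv_rhs => rw [← modByMonic_add_div p (X ^ N)]
  rw [coeff_add, coeff_X_pow_mul', if_neg hl.not_ge, add_zero]

theorem coeff_modByMonic_X_pow_of_ge (p : K[X]) {N l : ℕ} (hl : N ≤ l) :
    (p %ₘ X ^ N).coeff l = 0 :=
  coeff_eq_zero_of_degree_lt ((degree_modByMonic_X_pow_lt p N).trans_le (Nat.cast_le.2 hl))

theorem polyWeight_modByMonic_X_pow_le (c : Fin n → K[X]) (N : ℕ) :
    polyWeight (fun j => c j %ₘ X ^ N) ≤ polyWeight c := by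
  refine Finset.sum_le_sum fun j _ => Finset.card_le_card fun l hl => ?_
  rw [mem_support_iff] at hl ⊢
  rcases lt_or_ge l N with hlN | hlN
  · rwa [coeff_modByMonic_X_pow_of_lt _ hlN] at hl
  · exact absurd (coeff_modByMonic_X_pow_of_ge _ hlN) hl

theorem modByMonic_X_pow_eq_of_gap {p : K[X]} {t m : ℕ}
    (hgap : ∀ l, t ≤ l → l < t + m → p.coeff l = 0) : p %ₘ X ^ t = p %ₘ X ^ (t + m) := by
  ext l
  rcases lt_or_ge l t with hlt | hlt
  · rw [coeff_modByMonic_X_pow_of_lt _ hlt, coeff_modByMonic_X_pow_of_lt _ (by lia)]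
  · rw [coeff_modByMonic_X_pow_of_ge _ hlt]
    rcases lt_or_ge l (t + m) with hlm | hlm
    · rw [coeff_modByMonic_X_pow_of_lt _ hlm, hgap l hlt hlm]
    · rw [coeff_modByMonic_X_pow_of_ge _ hlm]

theorem modByMonic_X_pow_vecMul_eq_zero {A : Matrix (Fin n) ι K[X]} {m : ℕ}
    (hA : ∀ j i, (A j i).natDegree ≤ m) {c : Fin n → K[X]} (hc : c ᵥ* A = 0) {t : ℕ}
    (hgap : ∀ j l, t ≤ l → l < t + m → (c j).coeff l = 0) :
    (fun j => c j %ₘ X ^ t) ᵥ* A = 0 := by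
  funext i
  have hsplit : ∑ j, c j %ₘ X ^ t * A j i + X ^ (t + m) * ∑ j, c j /ₘ X ^ (t + m) * A j i = 0 :=
    calc
      _ = ∑ j, (c j %ₘ X ^ (t + m) + X ^ (t + m) * (c j /ₘ X ^ (t + m))) * A j i := by
        simp only [fun j => modByMonic_X_pow_eq_of_gap (hgap j), add_mul, Finset.sum_add_distrib,
          Finset.mul_sum, mul_assoc]
      _ = 0 := by
        simp only [modByMonic_add_div]
        exact congrFun hc i
  have hdeg : (∑ j, c j %ₘ X ^ t * A j i).degree < (X ^ (t + m) : K[X]).degree := by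
    rw [degree_X_pow, ← mem_degreeLT]
    refine Submodule.sum_mem _ fun j _ => mem_degreeLT.2 ?_
    calc (c j %ₘ X ^ t * A j i).degree
        ≤ (c j %ₘ X ^ t).degree + m :=
          degree_mul_le_of_le le_rfl (degree_le_of_natDegree_le (hA j i))
      _ < t + m :=
          WithBot.add_lt_add_right (WithBot.natCast_ne_bot m) (degree_modByMonic_X_pow_lt (c j) t)
      _ = (t + m : ℕ) := (Nat.cast_add t m).symm
  -- Both `0` and the truncated syndrome are the remainder of `0` modulo `X ^ (t + m)`.
  have hmod := (div_modByMonic_unique _ _ (monic_X_pow (t + m)) ⟨hsplit, hdeg⟩).2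
  rw [zero_modByMonic] at hmod
  exact hmod.symm

theorem exists_zero_block (c : Fin n → K[X]) (m : ℕ) :
    ∃ b ≤ polyWeight c, ∀ j l, l / m = b → (c j).coeff l = 0 := by
  classical
  let T : Finset (Σ _ : Fin n, ℕ) := Finset.univ.sigma fun j => (c j).support
  have hcard : (T.image fun x => x.2 / m).card < (Finset.range (polyWeight c + 1)).card := by
    rw [Finset.card_range, Nat.lt_succ_iff]
    exact Finset.card_image_le.trans_eq (Finset.card_sigma _ _)
  obtain ⟨b, hb, hbT⟩ := Finset.exists_mem_notMem_of_card_lt_card hcard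
  refine ⟨b, Finset.mem_range_succ_iff.1 hb, fun j l hl => by_contra fun hne => hbT ?_⟩
  exact Finset.mem_image.2 ⟨⟨j, l⟩, by simpa [T] using hne, hl⟩

theorem exists_natDegree_lt_polyWeight_mul {A : Matrix (Fin n) ι K[X]} {m : ℕ}
    (hA : ∀ j i, (A j i).natDegree ≤ m) {c : Fin n → K[X]} (hc0 : c ≠ 0) (hc : c ᵥ* A = 0) :
    ∃ c' : Fin n → K[X], c' ≠ 0 ∧ c' ᵥ* A = 0 ∧ polyWeight c' ≤ polyWeight c ∧
      ∀ j, (c' j).natDegree < polyWeight c * (m + 1) := by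
  obtain ⟨e, c, rfl, j₀, hj₀⟩ := exists_eq_X_pow_smul_coeff_zero_ne_zero hc0
  rw [smul_vecMul] at hc
  rw [polyWeight_X_pow_smul]
  replace hc : c ᵥ* A = 0 := (smul_eq_zero.1 hc).resolve_left (pow_ne_zero e X_ne_zero)
  obtain ⟨b, hb, hgap⟩ := exists_zero_block c (m + 1)
  have hb0 : 0 < b := Nat.pos_of_ne_zero fun h => hj₀ (hgap j₀ 0 (by rw [Nat.zero_div, h]))
  have ht : 0 < b * (m + 1) := Nat.mul_pos hb0 m.succ_pos
  refine ⟨fun j => c j %ₘ X ^ (b * (m + 1)), fun h => hj₀ ?_, ?_,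
    polyWeight_modByMonic_X_pow_le c _, fun j => ?_⟩
  · rw [← coeff_modByMonic_X_pow_of_lt (c j₀) ht, congrFun h j₀, Pi.zero_apply, coeff_zero]
  · refine modByMonic_X_pow_vecMul_eq_zero hA hc fun j l hl hl' => hgap j l ?_
    exact Nat.div_eq_of_lt_le hl (by lia)
  · refine lt_of_lt_of_le ?_ (Nat.mul_le_mul_right (m + 1) hb)
    have hX : (X ^ (b * (m + 1)) : K[X]) ≠ 1 := fun h => by
      simpa [ht.ne'] using congrArg natDegree h
    simpa only [natDegree_X_pow] using natDegree_modByMonic_lt (c j) (monic_X_pow _) hX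

end Truncation

section SlidingMatrix

/-- The sliding parity-check matrix of the convolutional code `{c | c ᵥ* A = 0}`: the block code it
checks consists of the words of degree less than `L`, the coordinate `(j, l)` being the coefficient
of `X ^ l` in the `j`-th entry. Only the first `N` coefficients of the syndrome are recorded. -/
noncomputable def slidingMatrix {S : Type*} [CommRing S] {n : ℕ} {ι : Type*}
    (A : Matrix (Fin n) ι S[X]) (L N : ℕ) : Matrix (ι × Fin N) (Fin n × Fin L) S :=
  of fun x y => (X ^ (y.2 : ℕ) * A y.1 x.1).coeff x.2

theorem slidingMatrix_map {S S' : Type*} [CommRing S] [CommRing S'] (f : S →+* S') {n : ℕ}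
    {ι : Type*} (A : Matrix (Fin n) ι S[X]) (L N : ℕ) :
    slidingMatrix (A.map (mapRingHom f)) L N = (slidingMatrix A L N).map f := by
  ext x y
  simp [slidingMatrix, coeff_X_pow_mul', apply_ite f]

variable {K : Type*} [Field K] [DecidableEq K] {n L : ℕ} {ι : Type*}

/-- The word with prescribed coefficients in degrees less than `L`. -/
noncomputable def wordOfCoeffs (v : Fin n × Fin L → K) (j : Fin n) : K[X] :=
  ofFn L fun l => v (j, l)

theorem wordOfCoeffs_ne_zero {v : Fin n × Fin L → K} (hv : v ≠ 0) : wordOfCoeffs v ≠ 0 := by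
  contrapose! hv
  funext ⟨j, l⟩
  simpa [wordOfCoeffs] using congrArg (fun p : K[X] => p.coeff l) (congrFun hv j)

theorem exists_wordOfCoeffs_eq {c : Fin n → K[X]} (hc : ∀ j, (c j).natDegree < L) :
    ∃ v : Fin n × Fin L → K, wordOfCoeffs v = c :=
  ⟨fun x => toFn L (c x.1) x.2, funext fun j => ofFn_comp_toFn_eq_id_of_natDegree_lt (hc j)⟩

theorem polyWeight_wordOfCoeffs (v : Fin n × Fin L → K) :
    polyWeight (wordOfCoeffs v) = hammingNorm v := by
  have hsupp : ∀ j, (wordOfCoeffs v j).support =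
      (Finset.univ.filter fun l => v (j, l) ≠ 0).map Fin.valEmbedding := by
    intro j
    ext l
    rcases lt_or_ge l L with hl | hl
    · simp [wordOfCoeffs, hl, Fin.exists_iff]
    · simp [wordOfCoeffs, hl, Fin.exists_iff, hl.not_gt]
  simp only [polyWeight, hammingNorm, hsupp, Finset.card_map, Finset.card_filter,
    Fintype.sum_prod_type]

theorem wordOfCoeffs_vecMul_eq_zero_iff {A : Matrix (Fin n) ι K[X]} {m : ℕ}
    (hA : ∀ j i, (A j i).natDegree ≤ m) (v : Fin n × Fin L → K) :
    wordOfCoeffs v ᵥ* A = 0 ↔ slidingMatrix A L (L + m) *ᵥ v = 0 := by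
  have hcoeff : ∀ i e, ((wordOfCoeffs v ᵥ* A) i).coeff e =
      ∑ y : Fin n × Fin L, (X ^ (y.2 : ℕ) * A y.1 i).coeff e * v y := by
    intro i e
    simp only [vecMul, dotProduct, wordOfCoeffs, ofFn_eq_sum_monomial, Finset.sum_mul,
      finsetSum_coeff, Fintype.sum_prod_type, ← C_mul_X_pow_eq_monomial, mul_assoc, coeff_C_mul,
      mul_comm (v _)]
  have hhigh : ∀ i e, L + m ≤ e → ((wordOfCoeffs v ᵥ* A) i).coeff e = 0 := by
    intro i e he
    rw [hcoeff]
    refine Finset.sum_eq_zero fun y _ => ?_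
    rw [coeff_X_pow_mul', coeff_eq_zero_of_natDegree_lt ((hA y.1 i).trans_lt (by lia)), ite_self,
      zero_mul]
  constructor
  · intro h
    funext x
    exact (hcoeff x.1 x.2).symm.trans (by simp only [h, Pi.zero_apply, coeff_zero])
  · intro h
    funext i
    ext e
    rcases lt_or_ge e (L + m) with he | he
    · exact (hcoeff i e).trans (congrFun h (i, ⟨e, he⟩))
    · exact hhigh i e he

theorem forall_le_polyWeight_iff_forall_le_hammingNorm {A : Matrix (Fin n) ι K[X]} {m : ℕ}
    (hA : ∀ j i, (A j i).natDegree ≤ m) (D : ℕ) :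
    (∀ c, c ≠ 0 → c ᵥ* A = 0 → D ≤ polyWeight c) ↔
      ∀ v, v ≠ 0 → slidingMatrix A (D * (m + 1)) (D * (m + 1) + m) *ᵥ v = 0 →
        D ≤ hammingNorm v := by
  constructor
  · intro h v hv0 hv
    rw [← polyWeight_wordOfCoeffs]
    exact h _ (wordOfCoeffs_ne_zero hv0) ((wordOfCoeffs_vecMul_eq_zero_iff hA v).2 hv)
  · intro h c hc0 hc
    by_contra! hlt
    obtain ⟨c', hc'0, hc', hweight, hdeg⟩ := exists_natDegree_lt_polyWeight_mul hA hc0 hc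
    obtain ⟨v, rfl⟩ := exists_wordOfCoeffs_eq fun j =>
      (hdeg j).trans_le (Nat.mul_le_mul_right (m + 1) hlt.le)
    have hv0 : v ≠ 0 := by
      rintro rfl
      exact hc'0 (funext fun _ => ofFn_zero _)
    have hv := h v hv0 ((wordOfCoeffs_vecMul_eq_zero_iff hA v).1 hc')
    rw [← polyWeight_wordOfCoeffs] at hv
    exact hlt.not_ge (hv.trans hweight)

end SlidingMatrix

theorem isZariskiOpen_forall_le_polyWeight {R K : Type*} [CommRing R] [Field K] {n : ℕ}
    {ι : Type*} [Finite ι] (A : Matrix (Fin n) ι R[X]) (D : ℕ) :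
    IsZariskiOpen {f : R →+* K |
      ∀ c, c ≠ 0 → c ᵥ* A.map (mapRingHom f) = 0 → D ≤ polyWeight c} := by
  classical
  obtain ⟨m, hm⟩ := (Set.finite_range fun x : Fin n × ι => (A x.1 x.2).natDegree).bddAbove
  have hA : ∀ (f : R →+* K) j i, (A.map (mapRingHom f) j i).natDegree ≤ m := fun f j i =>
    natDegree_map_le.trans (hm ⟨(j, i), rfl⟩)
  simp only [forall_le_polyWeight_iff_forall_le_hammingNorm (hA _), slidingMatrix_map]
  exact isZariskiOpen_forall_le_hammingNorm _ D

section ParityCheck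

variable {S : Type*} [CommRing S] {κ ν : Type*} [Fintype κ] [DecidableEq κ] [DecidableEq ν]

/-- The matrix of `c ↦ det G_φ • c - (c_φ ᵥ* adj G_φ) ᵥ* G`, where `G_φ` and `c_φ` consist of the
columns of `G` and the entries of `c` chosen by `φ`. This is Cramer's rule for solving `u ᵥ* G = c`
on these columns, cleared of denominators, so that it commutes with ring homomorphisms. -/
def cramerCheck (G : Matrix κ ν S) (φ : κ ↪ ν) : Matrix ν ν S :=
  (G.submatrix id φ).det • (1 : Matrix ν ν S) -
    (1 : Matrix ν ν S).submatrix id φ * (G.submatrix id φ).adjugate * G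

theorem cramerCheck_map {S' : Type*} [CommRing S'] (f : S →+* S') (G : Matrix κ ν S)
    (φ : κ ↪ ν) : cramerCheck (G.map f) φ = (cramerCheck G φ).map f := by
  have hone : (1 : Matrix ν ν S).map f = 1 := Matrix.map_one f f.map_zero f.map_one
  have hdet : ((G.map f).submatrix id φ).det = f (G.submatrix id φ).det :=
    (f.map_det (G.submatrix id φ)).symm
  have hadj : ((G.map f).submatrix id φ).adjugate = (G.submatrix id φ).adjugate.map f :=
    (f.map_adjugate (G.submatrix id φ)).symm
  rw [cramerCheck, cramerCheck, Matrix.map_sub f (map_sub f), Matrix.map_mul, Matrix.map_mul,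
    ← submatrix_map, Matrix.map_smul' f _ _ (map_mul f), hone, hdet, hadj]

/-- All Cramer checks of `G` side by side, so that the code they define is a single kernel. -/
def parityCheck (G : Matrix κ ν S) : Matrix ν ((κ ↪ ν) × ν) S :=
  of fun j x => cramerCheck G x.1 j x.2

theorem parityCheck_map {S' : Type*} [CommRing S'] (f : S →+* S') (G : Matrix κ ν S) :
    parityCheck (G.map f) = (parityCheck G).map f := by
  ext j x
  exact congrFun₂ (cramerCheck_map f G x.1) j x.2

variable [Fintype ν]

theorem mul_cramerCheck (G : Matrix κ ν S) (φ : κ ↪ ν) : G * cramerCheck G φ = 0 := by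
  have hcols : G * (1 : Matrix ν ν S).submatrix id φ = G.submatrix id φ :=
    mul_submatrix_one (Equiv.refl ν) φ G
  rw [cramerCheck, Matrix.mul_sub, ← Matrix.mul_assoc, ← Matrix.mul_assoc, hcols, mul_adjugate,
    Matrix.mul_smul, Matrix.mul_one, smul_mul, Matrix.one_mul, sub_self]

theorem vecMul_parityCheck_eq_zero_iff (G : Matrix κ ν S) (c : ν → S) :
    c ᵥ* parityCheck G = 0 ↔ ∀ φ, c ᵥ* cramerCheck G φ = 0 :=
  ⟨fun h φ => funext fun l => congrFun h (φ, l), fun h => funext fun x => congrFun (h x.1) x.2⟩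

theorem mem_span_row_iff_vecMul_parityCheck_eq_zero {G : Matrix κ ν S}
    (hG : Ideal.span (Set.range fun φ : κ ↪ ν => (G.submatrix id φ).det) = ⊤) (c : ν → S) :
    c ∈ Submodule.span S (Set.range G.row) ↔ c ᵥ* parityCheck G = 0 := by
  rw [vecMul_parityCheck_eq_zero_iff, ← range_vecMulLinear]
  constructor
  · rintro ⟨u, rfl⟩ φ
    rw [vecMulLinear_apply, vecMul_vecMul, mul_cramerCheck, vecMul_zero]
  · intro h
    refine Submodule.mem_of_span_top_of_smul_mem _ _ hG c ?_
    rintro ⟨_, φ, rfl⟩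
    have hφ := h φ
    rw [cramerCheck, vecMul_sub, sub_eq_zero, vecMul_smul, vecMul_one, ← vecMul_vecMul] at hφ
    exact ⟨_, hφ.symm⟩

end ParityCheck

section BasicMatrix

variable {K : Type*} [Field K] {k n : ℕ}

theorem IsBasic.mem_span_iff {G : Matrix (Fin k) (Fin n) K[X]} (hG : IsBasic G)
    (c : Fin n → K[X]) :
    c ∈ Submodule.span K[X] (Set.range G) ↔ c ᵥ* parityCheck G = 0 := by
  refine mem_span_row_iff_vecMul_parityCheck_eq_zero ?_ c
  rw [← hG]
  congr 1
  ext p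
  exact exists_congr fun φ => eq_comm

theorem IsBasic.exists_row_ne_zero (hk : 0 < k) {G : Fin k → Fin n → K[X]} (hG : IsBasic G) :
    ∃ i, G i ≠ 0 := by
  by_contra! h
  have hle : Ideal.span (maximalMinors G) ≤ ⊥ := by
    rw [Ideal.span_le]
    rintro _ ⟨φ, rfl⟩
    exact det_eq_zero_of_row_eq_zero ⟨0, hk⟩ fun j => congrFun (h _) (φ j)
  exact top_ne_bot (le_bot_iff.1 (hG.ge.trans hle))

theorem le_freeDist_iff {C : Submodule K[X] (Fin n → K[X])} (hC : C ≠ ⊥) (D : ℕ) :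
    D ≤ freeDist C ↔ ∀ c, c ≠ 0 → c ∈ C → D ≤ polyWeight c := by
  obtain ⟨c₀, hc₀, hne⟩ := C.ne_bot_iff.1 hC
  have hnonempty : {d | ∃ c ∈ C, c ≠ 0 ∧ polyWeight c = d}.Nonempty := ⟨_, c₀, hc₀, hne, rfl⟩
  rw [freeDist, le_csInf_iff (OrderBot.bddBelow _) hnonempty]
  constructor
  · exact fun h c h0 hc => h _ ⟨c, hc, h0, rfl⟩
  · rintro h _ ⟨c, hc, h0, rfl⟩
    exact h c h0 hc

theorem IsBasic.span_ne_bot (hk : 0 < k) {G : Fin k → Fin n → K[X]} (hG : IsBasic G) :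
    Submodule.span K[X] (Set.range G) ≠ ⊥ := by
  obtain ⟨i, hi⟩ := hG.exists_row_ne_zero hk
  exact (Submodule.ne_bot_iff _).2 ⟨G i, Submodule.subset_span ⟨i, rfl⟩, hi⟩

end BasicMatrix

theorem MDS_locus_open_general {R K : Type*} [CommRing R] [Field K] {k n : ℕ} (hk : 0 < k)
    (𝒢 : Fin k → Fin n → R[X]) (D : ℕ) :
    ∃ s : Finset R, ∀ f : R →+* K, IsBasic (fun i j => (𝒢 i j).map f) →
      (D ≤ freeDist (Submodule.span K[X] (Set.range fun i j => (𝒢 i j).map f)) ↔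
        ∃ p ∈ s, f p ≠ 0) := by
  obtain ⟨s, hs⟩ := isZariskiOpen_forall_le_polyWeight (K := K) (parityCheck (of 𝒢)) D
  refine ⟨s, fun f hf => ?_⟩
  rw [le_freeDist_iff (hf.span_ne_bot hk), ← hs f]
  simp only [hf.mem_span_iff, Set.mem_ofPred_eq, ← parityCheck_map]
  rfl

/-- For a family of convolutional codes over a Zariski open parameter set
`U ⊆ K^{r+1}` (`K` the algebraic closure of a finite field) whose members all have a canonical
generator matrix of degree `δ`, the MDS locus
`{α ∈ U : d_free(C_α) ≥ (n-k)(⌊δ/k⌋+1)+δ+1}` is Zariski open in `U`: it is the locus in `U`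
where at least one of finitely many polynomials does not vanish. -/
theorem MDS_locus_open {F : Type*} [Field F] [Fintype F]
    {K : Type*} [Field K] [Algebra F K] [IsAlgClosure F K] {k n r δ : ℕ} (hk : 0 < k)
    (𝒢 : Fin k → Fin n → Polynomial (MvPolynomial (Fin (r + 1)) F))
    (U : Set (Fin (r + 1) → K))
    (hU : ∃ s : Finset (MvPolynomial (Fin (r + 1)) K),
      Uᶜ = {α | ∀ p ∈ s, MvPolynomial.eval α p = 0})
    (hcan : ∀ α ∈ U,
      IsCanonical (fun i => fun j => (𝒢 i j).map
        (MvPolynomial.aeval α : MvPolynomial (Fin (r + 1)) F →ₐ[F] K).toRingHom) ∧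
      degCode (fun i => fun j => (𝒢 i j).map
        (MvPolynomial.aeval α : MvPolynomial (Fin (r + 1)) F →ₐ[F] K).toRingHom) = δ) :
    ∃ s : Finset (MvPolynomial (Fin (r + 1)) K), ∀ α ∈ U,
      ((n - k) * (δ / k + 1) + δ + 1 ≤
          freeDist (Submodule.span (Polynomial K) (Set.range fun i => fun j =>
            (𝒢 i j).map
              (MvPolynomial.aeval α : MvPolynomial (Fin (r + 1)) F →ₐ[F] K).toRingHom))
        ↔ ∃ p ∈ s, MvPolynomial.eval α p ≠ 0) := by
  classical
  obtain ⟨s, hs⟩ := MDS_locus_open_general (K := K) hk 𝒢 ((n - k) * (δ / k + 1) + δ + 1)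
  refine ⟨s.image (MvPolynomial.map (algebraMap F K)), fun α hα => (hs _ (hcan α hα).1.1).trans ?_⟩
  simp [MvPolynomial.eval_map, MvPolynomial.aeval_def]
end
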